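/- Let T be a ℂ-linear triangulated category of finite type with split-generator G, and let F₁, F₂ be triangulated endofunctors of T with F₁ⁿG ≇ 0, F₂ⁿG ≇ 0 and (F₁F₂)ⁿG ≇ 0 for all n ≥ 0. If F₁F₂ ≅ F₂F₁, then h_t(F₁F₂) ≤ h_t(F₁) + h_t(F₂) for all t ∈ ℝ. -/

import Mathlib

/-!
The heart of the matter is the submultiplicativity
`δ(G, H N) ≤ δ(G, H G) * δ(G, N)` for a triangulated functor `H` (`complexity_map_le`): apply `H` to
a tower building `N` from `G`, and replace every step `H G` by a tower building it from `G`.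
Commutation gives `(F₁ F₂)ᵐ G ≅ F₁ᵐ F₂ᵐ G`, so with `H = F₁ᵐ` and `N = F₂ᵐ G` one obtains
`δ(G, (F₁ F₂)ᵐ G) ≤ δ(G, F₁ᵐ G) * δ(G, F₂ᵐ G)`; then one takes logarithms, divides by `m` and passes
to the `limsup`. The sum of the two entropies is not of the form `⊤ + ⊥`, because
`δ(G, Fᵐ G) ≤ δ(G, F G) ^ m` with `δ(G, F G)` finite (`entropy_ne_top`).

Replacing a step of a tower by a tower requires associativity of extensions: if `E` is an extension
of `M` by `A` and `M` is an extension of `D` by `B`, then `E` is an extension of `D` by an extension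
of `B` by `A` (`IsExt.assoc`). Usually this is the octahedral axiom, which is not part of
`Pretriangulated`. It is proved here from finite-dimensionality of the endomorphism algebras.
Let `P` be the homotopy pullback of `e : E ⟶ M` and `g : B ⟶ M`, i.e. a cocone of
`(e, -g) : E ⊞ B ⟶ M`, and let `K` be a cone of `p₂ : P ⟶ B` and `A` a cone of `e`.
A morphism of triangles gives `f₀ : K ⟶ A`, which need not be an isomorphism; but any
`f₀ + k ≫ x ≫ m`, with `k : K ⟶ P⟦1⟧`, `m : M ⟶ A` the structure maps, is also allowed.
A diagram chase (`chase_isIso`) attaches to `f₀` an endomorphism `s` of `M` such that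
`f₀ + k ≫ x ≫ m` is an isomorphism as soon as `s + q ≫ x` (with `q : M ⟶ P⟦1⟧`) is invertible up to
maps factoring through `e` and `g`, and shows that `s` has a one-sided inverse modulo the ideal `J`
of endomorphisms of the form `q ≫ x + y ≫ e + w ≫ g`. In a finite-dimensional algebra such an `s` can
be corrected by an element of `J` to a unit (`exists_isUnit_add_mul`), through the Fitting
idempotent of `s`. Hence `K ≅ A`.
-/


open CategoryTheory Limits Pretriangulated Filter
open scoped ENNReal

universe u v u₂ v₂

namespace CatEntropy

section Defs

variable (C : Type u) [Category.{v} C] [Preadditive C] [HasZeroObject C]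
  [HasShift C ℤ] [∀ n : ℤ, (shiftFunctor C n).Additive] [Pretriangulated C]

/-- `C` is of finite type: for all objects `M, N`, the total dimension
`Σ_{n ∈ ℤ} dim_ℂ Hom(M, N⟦n⟧)` is finite. -/
def IsFiniteType [Linear ℂ C] : Prop :=
  ∀ M N : C, {n : ℤ | ¬ Subsingleton (M ⟶ N⟦n⟧)}.Finite ∧
    ∀ n : ℤ, FiniteDimensional ℂ (M ⟶ N⟦n⟧)

/-- A set of objects is a thick triangulated subcategory: closed under isomorphisms,
shifts, cones and direct summands. -/
structure IsThick (S : Set C) : Prop where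
  mem_of_iso : ∀ {X Y : C}, (X ≅ Y) → X ∈ S → Y ∈ S
  shift_mem : ∀ (X : C) (n : ℤ), X ∈ S → X⟦n⟧ ∈ S
  cone_mem : ∀ (T : Triangle C), T ∈ (distTriang C) → T.obj₁ ∈ S → T.obj₂ ∈ S → T.obj₃ ∈ S
  summand_mem : ∀ (X Y : C), (X ⊞ Y) ∈ S → X ∈ S

/-- `⟨M⟩`, the smallest thick triangulated subcategory containing `M`. -/
def thickClosure (M : C) : Set C :=
  ⋂₀ {S : Set C | IsThick C S ∧ M ∈ S}

/-- `G` is a split-generator of `C` if `⟨G⟩ = C`. -/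
def IsSplitGenerator (G : C) : Prop := ∀ X : C, X ∈ thickClosure C G

open Classical in
/-- The complexity `δ_{C,t}(M, N)` of `N` with respect to `M`. -/
noncomputable def complexity (t : ℝ) (M N : C) : ℝ≥0∞ :=
  if IsZero N then 0
  else if N ∈ thickClosure C M then
    sInf {c : ℝ≥0∞ |
      ∃ (p : ℕ) (_ : 0 < p) (n : Fin p → ℤ) (A : Fin (p + 1) → C) (N' : C),
        IsZero (A 0) ∧ Nonempty (A (Fin.last p) ≅ N ⊞ N') ∧
        (∀ i : Fin p,
          ∃ (f : A i.castSucc ⟶ A i.succ) (g : A i.succ ⟶ M⟦n i⟧)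
            (h : M⟦n i⟧ ⟶ (A i.castSucc)⟦(1 : ℤ)⟧),
              Triangle.mk f g h ∈ (distTriang C)) ∧
        c = ∑ i : Fin p, ENNReal.ofReal (Real.exp ((n i : ℝ) * t))}
  else ⊤

/-- Iterated composition `Fⁿ` of an endofunctor. -/
def iter (F : C ⥤ C) : ℕ → C ⥤ C
  | 0 => 𝟭 C
  | n + 1 => iter F n ⋙ F

/-- The entropy `h_t(F)` of an endofunctor `F`, computed with the split-generator `G`
(the defining limit exists and agrees with the `limsup` used here). -/
noncomputable def entropy (F : C ⥤ C) (G : C) (t : ℝ) : EReal :=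
  Filter.atTop.limsup fun m : ℕ =>
    (((m : ℝ)⁻¹ : ℝ) : EReal) * (complexity C t G ((iter C F m).obj G)).log

end Defs

/-! ### A correction lemma in finite-dimensional algebras -/

/-- A one-sided unit modulo `J` can be corrected by an element of `J` to a unit. The element `p` is
the Fitting idempotent of `s`, i.e. the polynomial in `s` that projects onto its generalized
`0`-eigenspace; it lies in `J` because `p * s ^ (n + 1) = 0` while `s ^ (n + 1) * x ^ (n + 1)` is
`1` modulo `J`, and `s + p * (1 - s)` acts as `s` on the image of `1 - p` and as `1` on that of
`p`. -/
lemma exists_isUnit_add_mul {R : Type*} [Ring R] [Algebra ℂ R] [FiniteDimensional ℂ R]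
    (J : TwoSidedIdeal R) (s x : R) (h : s * x - 1 ∈ J) :
    ∃ p ∈ J, IsUnit (s + p * (1 - s)) := by
  obtain ⟨g, hg, hng⟩ := Polynomial.exists_eq_pow_rootMultiplicity_mul_and_not_dvd
    (minpoly ℂ s) (minpoly.ne_zero (Algebra.IsIntegral.isIntegral s)) 0
  set n := Polynomial.rootMultiplicity 0 (minpoly ℂ s)
  rw [Polynomial.C_0, sub_zero] at hg hng
  obtain ⟨a, b, hab⟩ : IsCoprime (Polynomial.X ^ (n + 1)) g :=
    ((Polynomial.irreducible_X.coprime_iff_not_dvd).2 hng).pow_left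
  have hzero : s ^ (n + 1) * Polynomial.aeval s g = 0 := by
    have := minpoly.aeval ℂ s
    rw [hg, map_mul, map_pow, Polynomial.aeval_X] at this
    rw [pow_succ', mul_assoc, this, mul_zero]
  have hab' := congrArg (Polynomial.aeval s) hab
  simp only [map_add, map_mul, map_pow, Polynomial.aeval_X, map_one] at hab'
  have hcs (f : Polynomial ℂ) : Commute s (Polynomial.aeval s f) := by
    have : Commute (Polynomial.aeval s (Polynomial.X : Polynomial ℂ)) (Polynomial.aeval s f) := by
      rw [Commute, SemiconjBy, ← map_mul, ← map_mul, mul_comm]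
    rwa [Polynomial.aeval_X] at this
  have hcc (f f' : Polynomial ℂ) : Commute (Polynomial.aeval s f) (Polynomial.aeval s f') := by
    rw [Commute, SemiconjBy, ← map_mul, ← map_mul, mul_comm]
  set A := Polynomial.aeval s a
  set B := Polynomial.aeval s b
  set Γ := Polynomial.aeval s g
  have hsp : s ^ (n + 1) * (B * Γ) = 0 := by
    rw [(hcc b g).eq, ← mul_assoc, hzero, zero_mul]
  have hcp : Commute s (B * Γ) := (hcs b).mul_right (hcs g)
  have hpp : B * Γ * (B * Γ) = B * Γ := by
    have h1 := congrArg (· * (B * Γ)) hab'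
    simp only [add_mul, mul_assoc, one_mul] at h1
    rwa [hsp, mul_zero, zero_add, ← mul_assoc B] at h1
  refine ⟨B * Γ, ?_, ?_⟩
  · have hpow : ∀ k : ℕ, s ^ k * x ^ k - 1 ∈ J := by
      intro k
      induction k with
      | zero => simp [J.zero_mem]
      | succ k ih =>
        have : s ^ (k + 1) * x ^ (k + 1) - 1
            = s ^ k * (s * x - 1) * x ^ k + (s ^ k * x ^ k - 1) := by
          rw [pow_succ, pow_succ']; noncomm_ring
        rw [this]
        exact J.add_mem (J.mul_mem_right _ _ (J.mul_mem_left _ _ h)) ih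
    have h2 := J.neg_mem (J.mul_mem_left (B * Γ) _ (hpow (n + 1)))
    have h3 : -(B * Γ * (s ^ (n + 1) * x ^ (n + 1) - 1)) = B * Γ := by
      rw [mul_sub, ← mul_assoc, ← (hcp.pow_left (n + 1)).eq, hsp]; simp
    rwa [h3] at h2
  · -- In `ℂ[s]` the inverse of `s (1 - p) + p` is `a s ^ n (1 - p) + p`, as `a s ^ (n + 1) = 1 - p`.
    obtain ⟨U, V, z, w, hU, hz, hUV⟩ : ∃ U V z w : Polynomial ℂ,
        Polynomial.aeval s U = s + B * Γ * (1 - s) ∧ Polynomial.aeval s z = 0 ∧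
          U * V = 1 + z * w := by
      refine ⟨Polynomial.X + b * g * (1 - Polynomial.X), a * Polynomial.X ^ n * (1 - b * g) + b * g,
        b * g - b * g * (b * g), Polynomial.X + a * Polynomial.X ^ n + b * g - 3, ?_, ?_, ?_⟩
      · simp [B, Γ]
      · rw [map_sub, map_mul _ (b * g) (b * g), map_mul _ b g, hpp, sub_self]
      · linear_combination (1 - b * g) ^ 2 * hab
    have h1 : Polynomial.aeval s U * Polynomial.aeval s V = 1 := by
      rw [← map_mul, hUV, map_add, map_mul, hz, zero_mul, add_zero, map_one]
    rw [← hU]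
    exact ⟨⟨_, _, h1, (hcc V U).eq.trans h1⟩, rfl⟩

/-! ### Comparison of cones in a homotopy cartesian square -/

/-- The subalgebra of endomorphisms of `M` that extend along `q : M ⟶ Q` to an endomorphism
of `Q`. -/
def liftable {C : Type u} [Category.{v} C] [Preadditive C] [Linear ℂ C] {M Q : C} (q : M ⟶ Q) :
    Subalgebra ℂ (End M) where
  carrier := {r : M ⟶ M | ∃ r' : Q ⟶ Q, r ≫ q = q ≫ r'}
  mul_mem' := by
    rintro r₁ r₂ ⟨r₁', h₁⟩ ⟨r₂', h₂⟩
    exact ⟨r₂' ≫ r₁', by rw [End.mul_def, Category.assoc, h₁, reassoc_of% h₂]⟩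
  add_mem' := by
    rintro r₁ r₂ ⟨r₁', h₁⟩ ⟨r₂', h₂⟩
    exact ⟨r₁' + r₂', by
      rw [Preadditive.comp_add, ← h₁, ← h₂]; exact Preadditive.add_comp _ _ _ _ _ _⟩
  algebraMap_mem' c := ⟨c • 𝟙 Q, by
    rw [Algebra.algebraMap_eq_smul_one]
    rw [Linear.comp_smul, Category.comp_id]
    exact (Linear.smul_comp _ _ _ _ _ _).trans (by rw [End.one_def, Category.id_comp])⟩

/-- The diagram chase comparing the cones `K` of `p₂` and `A` of `e` in a homotopy cartesian square
with corner `P` and sides `e : E ⟶ M`, `g : B ⟶ M`. Here `P₁`, `E₁`, `B₁`, `p₁'`, `p₂'` play the role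
of the shifts of `P`, `E`, `B`, `p₁`, `p₂`; the three triangles involved enter only through the
vanishing of compositions and the exactness properties `ex*` (for maps into them) and `co*` (for
maps out of them). -/
lemma chase_isIso {C : Type u} [Category.{v} C] [Preadditive C] [Linear ℂ C]
    {E B M P K A P₁ E₁ B₁ : C} [FiniteDimensional ℂ (End M)]
    (p₂ : P ⟶ B) (e : E ⟶ M) (g : B ⟶ M) (q : M ⟶ P₁)
    (p₁' : P₁ ⟶ E₁) (p₂' : P₁ ⟶ B₁) (j : B ⟶ K) (k : K ⟶ P₁) (m : M ⟶ A) (a : A ⟶ E₁)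
    (f₀ : K ⟶ A) (θ : A ⟶ K) (ψ : A ⟶ P₁)
    (hf₁ : j ≫ f₀ = g ≫ m) (hf₂ : f₀ ≫ a = k ≫ p₁') (hθ : g ≫ m ≫ θ = j)
    (hψ₁ : ψ ≫ p₁' = a) (hψ₂ : ψ ≫ p₂' = 0)
    (heq : e ≫ q = 0) (hgq : g ≫ q = 0) (hqp₁ : q ≫ p₁' = 0) (hqp₂ : q ≫ p₂' = 0)
    (hp₂j : p₂ ≫ j = 0) (hjk : j ≫ k = 0) (hkp : k ≫ p₂' = 0)
    (hem : e ≫ m = 0) (hma : m ≫ a = 0)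
    (exq : ∀ {Z : C} (z : Z ⟶ P₁), z ≫ p₁' = 0 → z ≫ p₂' = 0 → ∃ y, z = y ≫ q)
    (exk : ∀ {Z : C} (z : Z ⟶ P₁), z ≫ p₂' = 0 → ∃ y, z = y ≫ k)
    (exj : ∀ {Z : C} (z : Z ⟶ K), z ≫ k = 0 → ∃ y, z = y ≫ j)
    (exm : ∀ {Z : C} (z : Z ⟶ A), z ≫ a = 0 → ∃ y, z = y ≫ m)
    (exe : ∀ {Z : C} (z : Z ⟶ M), z ≫ m = 0 → ∃ y, z = y ≫ e)
    (exp : ∀ {Z : C} (y : Z ⟶ E) (x : Z ⟶ B), y ≫ e = x ≫ g → ∃ w : Z ⟶ P, x = w ≫ p₂)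
    (coq : ∀ {Z : C} (z : M ⟶ Z), e ≫ z = 0 → g ≫ z = 0 → ∃ y, z = q ≫ y)
    (coj : ∀ {Z : C} (z : K ⟶ Z), j ≫ z = 0 → ∃ y, z = k ≫ y)
    (exc : ∀ {Z : C} (z : Z ⟶ M), z ≫ q = 0 → ∃ x y, z = x ≫ e + y ≫ g) :
    Nonempty (K ≅ A) := by
  obtain ⟨κ, hκ⟩ := exk q hqp₂
  obtain ⟨s, hs⟩ := exm (κ ≫ f₀) (by rw [Category.assoc, hf₂, ← reassoc_of% hκ, hqp₁])
  -- `s` preserves the maps killed by `q`, i.e. those factoring through `(e, g)`, hence is liftable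
  have hs_aux {X : C} (x : X ⟶ M) (hx : x ≫ q = 0) : x ≫ s ≫ q = 0 := by
    obtain ⟨γ, hγ⟩ := exj (x ≫ κ) (by rw [Category.assoc, ← hκ, hx])
    obtain ⟨ε, hε⟩ := exe (x ≫ s - γ ≫ g) (by
      rw [Preadditive.sub_comp, Category.assoc, ← hs, reassoc_of% hγ, hf₁, Category.assoc, sub_self])
    rw [sub_eq_iff_eq_add] at hε
    rw [reassoc_of% hε]
    simp [heq, hgq]
  obtain ⟨s', hs'⟩ := coq (s ≫ q) (hs_aux e heq) (hs_aux g hgq)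
  obtain ⟨φ, hφ⟩ := exk ψ hψ₂
  obtain ⟨y, hy⟩ := exm (φ ≫ f₀ - 𝟙 A) (by
    rw [Preadditive.sub_comp, Category.assoc, hf₂, ← reassoc_of% hφ, hψ₁, Category.id_comp, sub_self])
  rw [sub_eq_iff_eq_add] at hy
  obtain ⟨z, hz⟩ := coj (f₀ ≫ θ - 𝟙 K) (by
    rw [Preadditive.comp_sub, reassoc_of% hf₁, hθ, Category.comp_id, sub_self])
  rw [sub_eq_iff_eq_add] at hz
  obtain ⟨ρ, hρ⟩ := coq (m ≫ θ ≫ f₀ - m) (by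
      rw [Preadditive.comp_sub, reassoc_of% hem, hem, zero_comp, sub_self]) (by
      rw [Preadditive.comp_sub, reassoc_of% hθ, hf₁, sub_self])
  rw [sub_eq_iff_eq_add] at hρ
  obtain ⟨x₀, hx₀⟩ := exq (m ≫ θ ≫ k - q ≫ ρ ≫ ψ) (by
      simp only [Preadditive.sub_comp, Category.assoc, hψ₁, ← hf₂]
      rw [reassoc_of% hρ, Preadditive.add_comp, hma]; simp) (by
      simp [hkp, hψ₂])
  obtain ⟨x₀', hx₀'⟩ := coq (x₀ ≫ q) (by
      rw [← hx₀]; simp [reassoc_of% hem, reassoc_of% heq]) (by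
      rw [← hx₀]; simp [reassoc_of% hθ, hjk, reassoc_of% hgq])
  obtain ⟨γ, hγ⟩ := exj ((x₀ ≫ s - 𝟙 M) ≫ m ≫ θ - q ≫ (x₀' ≫ z - ρ ≫ φ)) (by
      have h1 : x₀ ≫ s ≫ m ≫ θ ≫ k = x₀ ≫ q + x₀ ≫ q ≫ z ≫ k := by
        rw [← reassoc_of% hs, reassoc_of% hz, hκ]
        simp [add_comm]
      simp only [Preadditive.sub_comp, Preadditive.comp_sub, Category.assoc, h1, Category.id_comp,
        ← hφ, ← reassoc_of% hx₀']
      rw [← hx₀]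
      abel)
  rw [← hθ] at hγ
  obtain ⟨D, hD⟩ : ∃ D, D = x₀ ≫ s - 𝟙 M - γ ≫ g := ⟨_, rfl⟩
  have hDθ : D ≫ m ≫ θ = q ≫ (x₀' ≫ z - ρ ≫ φ) := by
    rw [sub_eq_iff_eq_add] at hγ
    rw [hD, Preadditive.sub_comp, hγ]
    simp
  have hDq : D ≫ q = q ≫ (x₀' ≫ s' - 𝟙 P₁) := by
    rw [hD]
    simp [hgq, hs', reassoc_of% hx₀']
  obtain ⟨ω, hω⟩ : ∃ ω : P₁ ⟶ A, D ≫ m = q ≫ ω := by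
    refine ⟨(x₀' ≫ z - ρ ≫ φ) ≫ f₀ - (x₀' ≫ s' - 𝟙 P₁) ≫ ρ, ?_⟩
    rw [Preadditive.comp_sub, ← reassoc_of% hDθ, ← reassoc_of% hDq, hρ]
    simp
  obtain ⟨y₀, hy₀⟩ := exq (q ≫ ω ≫ ψ) (by
      simp [hψ₁, ← reassoc_of% hω, hma]) (by simp [hψ₂])
  obtain ⟨γ₂, hγ₂⟩ := exj (q ≫ ω ≫ φ - y₀ ≫ κ) (by simp [← hφ, ← hκ, hy₀])
  obtain ⟨ε, hε⟩ := exe (D - (y₀ ≫ s + γ₂ ≫ g - q ≫ ω ≫ y)) (by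
    have h1 := congrArg (· ≫ f₀) hγ₂
    simp only [Preadditive.sub_comp, Category.assoc, hy, hf₁, hs, Preadditive.comp_add,
      Category.comp_id] at h1
    simp only [Preadditive.sub_comp, Preadditive.add_comp, Category.assoc, ← h1, hω]
    abel)
  have hsx : (x₀ - y₀) ≫ s - 𝟙 M = q ≫ (-(ω ≫ y)) + ε ≫ e + (γ + γ₂) ≫ g := by
    rw [sub_eq_iff_eq_add, hD] at hε
    simp only [Preadditive.sub_comp, Preadditive.add_comp, Preadditive.comp_neg]
    rw [sub_eq_iff_eq_add, sub_eq_iff_eq_add] at hε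
    rw [hε]
    abel
  -- By `hsx`, `x₀ - y₀` is an inverse of `s` on one side modulo the ideal `J` below. Recall that
  -- multiplication in `End M` is composition in the opposite order.
  have hlift {r : M ⟶ M} (hr : r ∈ liftable q) {X : C} (x : X ⟶ M) (hx : x ≫ q = 0) :
      x ≫ r ≫ q = 0 := by
    obtain ⟨r', hr'⟩ := hr
    rw [hr', reassoc_of% hx, zero_comp]
  let J : TwoSidedIdeal (liftable q) := TwoSidedIdeal.mk'
    {r | ∃ (x : P₁ ⟶ M) (y : M ⟶ E) (w : M ⟶ B), (r : End M) = q ≫ x + y ≫ e + w ≫ g}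
    ⟨0, 0, 0, by simp⟩
    (by
      rintro r₁ r₂ ⟨x₁, y₁, w₁, h₁⟩ ⟨x₂, y₂, w₂, h₂⟩
      refine ⟨x₁ + x₂, y₁ + y₂, w₁ + w₂, ?_⟩
      rw [AddMemClass.coe_add, h₁, h₂]
      simp only [Preadditive.add_comp, Preadditive.comp_add]
      change (_ : M ⟶ M) + _ = _
      abel)
    (by
      rintro r₁ ⟨x₁, y₁, w₁, h₁⟩
      refine ⟨-x₁, -y₁, -w₁, ?_⟩
      rw [NegMemClass.coe_neg, h₁]
      simp only [Preadditive.neg_comp, Preadditive.comp_neg]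
      change -(_ : M ⟶ M) = _
      abel)
    (by
      rintro ⟨r, hr⟩ ⟨r₁, _⟩ ⟨x₁, y₁, w₁, h₁⟩
      obtain ⟨x₂, w₂, h₂⟩ := exc ((y₁ ≫ e + w₁ ≫ g) ≫ r) (by
        rw [Category.assoc]
        exact hlift hr _ (by simp [heq, hgq]))
      refine ⟨x₁ ≫ r, x₂, w₂, ?_⟩
      change r₁ = _ at h₁
      change r₁ ≫ r = _
      rw [h₁, add_assoc, add_assoc, ← h₂]
      simp)
    (by
      rintro ⟨r₁, _⟩ ⟨r, r', hr⟩ ⟨x₁, y₁, w₁, h₁⟩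
      refine ⟨r' ≫ x₁, r ≫ y₁, r ≫ w₁, ?_⟩
      change r₁ = _ at h₁
      change r ≫ r₁ = _
      rw [h₁, ← reassoc_of% hr]
      simp)
  have hxR : x₀ - y₀ ∈ liftable q :=
    ⟨x₀' - ω ≫ ψ, by rw [Preadditive.sub_comp, Preadditive.comp_sub, hx₀', hy₀]⟩
  obtain ⟨⟨p, hpR⟩, hpJ, hunit⟩ := exists_isUnit_add_mul J ⟨s, s', hs'⟩ ⟨x₀ - y₀, hxR⟩ (by
    rw [TwoSidedIdeal.mem_mk']
    exact ⟨_, _, _, hsx⟩)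
  rw [TwoSidedIdeal.mem_mk'] at hpJ
  obtain ⟨x₁, y₁, w₁, hp⟩ := hpJ
  change p = _ at hp
  obtain ⟨s₁, r, hr, hs₁', hsr', hrs'⟩ : ∃ s₁ r : M ⟶ M, r ∈ liftable q ∧
      s₁ = s + (𝟙 M - s) ≫ p ∧ r ≫ s₁ = 𝟙 M ∧ s₁ ≫ r = 𝟙 M := by
    obtain ⟨⟨⟨s₁, _⟩, ⟨r, hr⟩, hsr, hrs⟩, hs₁⟩ := hunit
    exact ⟨s₁, r, hr, congrArg Subtype.val hs₁, congrArg Subtype.val hsr,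
      congrArg Subtype.val hrs⟩
  obtain ⟨x, hx⟩ : ∃ x, x = (𝟙 P₁ - s') ≫ x₁ := ⟨_, rfl⟩
  obtain ⟨ε₁, γ₁, hs₂⟩ : ∃ (ε₁ : M ⟶ E) (γ₁ : M ⟶ B), s + q ≫ x = s₁ - ε₁ ≫ e - γ₁ ≫ g := by
    refine ⟨(𝟙 M - s) ≫ y₁, (𝟙 M - s) ≫ w₁, ?_⟩
    rw [hs₁', hp, hx]
    simp [reassoc_of% hs']
    abel
  -- The corrected map `f₀ + k ≫ x ≫ m` corresponds to the unit `s₁` up to `e` and `g`.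
  have hκf : κ ≫ (f₀ + k ≫ x ≫ m) = (s₁ - ε₁ ≫ e - γ₁ ≫ g) ≫ m := by
    rw [← hs₂, Preadditive.comp_add, hs, ← reassoc_of% hκ]
    simp
  have hjf : j ≫ (f₀ + k ≫ x ≫ m) = g ≫ m := by
    rw [Preadditive.comp_add, hf₁, reassoc_of% hjk]
    simp
  have hfa : (f₀ + k ≫ x ≫ m) ≫ a = k ≫ p₁' := by
    simp [hma, hf₂]
  have : IsIso (f₀ + k ≫ x ≫ m) := by
    refine isIso_of_yoneda_map_bijective _ (fun Z => ⟨?_, fun α => ?_⟩)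
    · refine (injective_iff_map_eq_zero (Preadditive.rightComp Z (f₀ + k ≫ x ≫ m))).2 ?_
      intro ζ hζ
      change ζ ≫ _ = 0 at hζ
      obtain ⟨μ, hμ⟩ := exq (ζ ≫ k) (by
        rw [Category.assoc, ← hfa, reassoc_of% hζ, zero_comp]) (by rw [Category.assoc, hkp, comp_zero])
      obtain ⟨γ, hγ⟩ := exj (ζ - μ ≫ κ) (by rw [Preadditive.sub_comp, Category.assoc, ← hκ, hμ, sub_self])
      rw [sub_eq_iff_eq_add] at hγ
      have h1 : (γ ≫ g + μ ≫ (s₁ - ε₁ ≫ e - γ₁ ≫ g)) ≫ m = 0 := by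
        rw [← hζ, hγ]
        simp only [Preadditive.add_comp, Category.assoc, hκf, hjf]
      obtain ⟨ε, hε⟩ := exe _ h1
      have h2 : μ ≫ q = 0 := by
        have h3 : μ ≫ s₁ = (ε + μ ≫ ε₁) ≫ e + (μ ≫ γ₁ - γ) ≫ g := by
          rw [← eq_sub_iff_add_eq'] at hε
          simp only [Preadditive.comp_sub] at hε
          rw [sub_eq_iff_eq_add, sub_eq_iff_eq_add] at hε
          rw [hε]
          simp
          abel
        have h4 := hlift hr (μ ≫ s₁) (by rw [h3]; simp [heq, hgq])
        rwa [Category.assoc, reassoc_of% hrs'] at h4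
      obtain ⟨γ', hγ'⟩ := exj ζ (hμ.trans h2)
      obtain ⟨ε', hε'⟩ := exe (γ' ≫ g) (by rw [Category.assoc, ← hjf, ← reassoc_of% hγ', hζ])
      obtain ⟨w, hw⟩ := exp _ _ hε'.symm
      rw [hγ', hw, Category.assoc, hp₂j, comp_zero]
    · obtain ⟨μ, hμ⟩ := exm (α - α ≫ φ ≫ (f₀ + k ≫ x ≫ m)) (by
        rw [Preadditive.sub_comp, Category.assoc, Category.assoc, hfa, ← reassoc_of% hφ, hψ₁,
          sub_self])
      refine ⟨α ≫ φ + μ ≫ r ≫ κ + μ ≫ r ≫ γ₁ ≫ j, ?_⟩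
      rw [sub_eq_iff_eq_add] at hμ
      have h1 : α ≫ φ ≫ (f₀ + k ≫ x ≫ m) = α - μ ≫ m := by
        conv_rhs => rw [hμ]
        abel
      simp only [Preadditive.add_comp, Category.assoc, hκf, hjf, h1]
      simp [hem, reassoc_of% hsr']
  exact ⟨asIso (f₀ + k ≫ x ≫ m)⟩

/-! ### Extensions of objects -/

section Ext

variable {C : Type u} [Category.{v} C] [Preadditive C] [HasZeroObject C]
  [HasShift C ℤ] [∀ n : ℤ, (shiftFunctor C n).Additive] [Pretriangulated C]

/-- `E` is an extension of `M` by `A`: there is a distinguished triangle `A ⟶ E ⟶ M ⟶ A⟦1⟧`. -/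
def IsExt (A E M : C) : Prop :=
  ∃ (f : A ⟶ E) (g : E ⟶ M) (h : M ⟶ A⟦(1 : ℤ)⟧), Triangle.mk f g h ∈ distTriang C

lemma isExt_of_dist (T : Triangle C) (hT : T ∈ distTriang C) : IsExt T.obj₁ T.obj₂ T.obj₃ :=
  ⟨T.mor₁, T.mor₂, T.mor₃, hT⟩

lemma IsExt.of_iso {A E M A' E' M' : C} (h : IsExt A E M) (a : A ≅ A') (e : E ≅ E') (m : M ≅ M') :
    IsExt A' E' M' := by
  obtain ⟨f, g, k, hT⟩ := h
  refine ⟨a.inv ≫ f ≫ e.hom, e.inv ≫ g ≫ m.hom, m.inv ≫ k ≫ a.hom⟦(1 : ℤ)⟧',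
    isomorphic_distinguished _ hT _ ?_⟩
  refine Triangle.isoMk _ _ a.symm e.symm m.symm ?_ ?_ ?_
  · change (a.inv ≫ f ≫ e.hom) ≫ e.inv = a.inv ≫ f
    simp
  · change (e.inv ≫ g ≫ m.hom) ≫ m.inv = e.inv ≫ g
    simp
  · change (m.inv ≫ k ≫ a.hom⟦(1 : ℤ)⟧') ≫ a.inv⟦(1 : ℤ)⟧' = m.inv ≫ k
    simp [← Functor.map_comp]

lemma IsExt.rotate {A E M : C} (h : IsExt A E M) : IsExt E M (A⟦(1 : ℤ)⟧) := by
  obtain ⟨f, g, k, hT⟩ := h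
  exact isExt_of_dist _ (rot_of_distTriang _ hT)

lemma IsExt.invRotate {A E M : C} (h : IsExt E M (A⟦(1 : ℤ)⟧)) : IsExt A E M := by
  obtain ⟨f, g, k, hT⟩ := h
  exact (isExt_of_dist _ (inv_rot_of_distTriang _ hT)).of_iso
    ((shiftEquiv C (1 : ℤ)).unitIso.app A).symm (Iso.refl _) (Iso.refl _)

lemma IsExt.shift {A E M : C} (h : IsExt A E M) (n : ℤ) : IsExt (A⟦n⟧) (E⟦n⟧) (M⟦n⟧) := by
  obtain ⟨f, g, k, hT⟩ := h
  exact isExt_of_dist _ (Triangle.shift_distinguished _ hT n)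

lemma IsExt.map {A E M : C} (h : IsExt A E M) (H : C ⥤ C) [H.CommShift ℤ] [H.IsTriangulated] :
    IsExt (H.obj A) (H.obj E) (H.obj M) := by
  obtain ⟨f, g, k, hT⟩ := h
  exact isExt_of_dist _ (H.map_distinguished _ hT)

lemma isExt_biprod (X Y : C) : IsExt X (X ⊞ Y) Y :=
  isExt_of_dist _ (binaryBiproductTriangle_distinguished X Y)

lemma nonempty_pi_bool_iso_biprod (F : Bool → C) : Nonempty (∏ᶜ F ≅ F true ⊞ F false) :=
  ⟨{ hom := biprod.lift (Pi.π F true) (Pi.π F false)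
     inv := Pi.lift (fun b => match b with
      | true => biprod.fst
      | false => biprod.snd)
     hom_inv_id := by
      apply Pi.hom_ext
      rintro (_ | _) <;> simp
     inv_hom_id := by
      apply biprod.hom_ext <;> simp }⟩

lemma IsExt.biprod {A E M A' E' M' : C} (h : IsExt A E M) (h' : IsExt A' E' M') :
    IsExt (A ⊞ A') (E ⊞ E') (M ⊞ M') := by
  obtain ⟨f, g, k, hT⟩ := h
  obtain ⟨f', g', k', hT'⟩ := h'
  let T : Bool → Triangle C := fun b => match b with
    | true => Triangle.mk f g k
    | false => Triangle.mk f' g' k'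
  have hT'' : ∀ b, T b ∈ distTriang C := by
    rintro (_ | _)
    · exact hT'
    · exact hT
  obtain ⟨i₁⟩ := nonempty_pi_bool_iso_biprod (fun b => (T b).obj₁)
  obtain ⟨i₂⟩ := nonempty_pi_bool_iso_biprod (fun b => (T b).obj₂)
  obtain ⟨i₃⟩ := nonempty_pi_bool_iso_biprod (fun b => (T b).obj₃)
  exact (isExt_of_dist _ (productTriangle_distinguished T hT'')).of_iso i₁ i₂ i₃

/-- Parallel sides `p₂ : P ⟶ B` and `e : E ⟶ M` of a homotopy cartesian square have isomorphic cones. -/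
lemma iso_cone_of_homotopyCartesian [Linear ℂ C] {E B M P K A : C} [FiniteDimensional ℂ (End M)]
    {p₁ : P ⟶ E} {p₂ : P ⟶ B} {e : E ⟶ M} {g : B ⟶ M} {q : M ⟶ P⟦(1 : ℤ)⟧}
    (h₁ : Triangle.mk (biprod.lift p₁ p₂) (biprod.desc e (-g)) q ∈ distTriang C)
    {j : B ⟶ K} {k : K ⟶ P⟦(1 : ℤ)⟧} (h₂ : Triangle.mk p₂ j k ∈ distTriang C)
    {m : M ⟶ A} {a : A ⟶ E⟦(1 : ℤ)⟧} (h₃ : Triangle.mk e m a ∈ distTriang C) :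
    Nonempty (K ≅ A) := by
  have hsq : p₁ ≫ e = p₂ ≫ g := by
    have h : biprod.lift p₁ p₂ ≫ biprod.desc e (-g) = 0 := comp_distTriang_mor_zero₁₂ _ h₁
    rwa [biprod.lift_desc, Preadditive.comp_neg, add_neg_eq_zero] at h
  have hcq : biprod.desc e (-g) ≫ q = 0 := comp_distTriang_mor_zero₂₃ _ h₁
  have hqp : q ≫ (biprod.lift p₁ p₂)⟦(1 : ℤ)⟧' = 0 := comp_distTriang_mor_zero₃₁ _ h₁
  have hem : e ≫ m = 0 := comp_distTriang_mor_zero₁₂ _ h₃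
  have hma : m ≫ a = 0 := comp_distTriang_mor_zero₂₃ _ h₃
  have hae : a ≫ e⟦(1 : ℤ)⟧' = 0 := comp_distTriang_mor_zero₃₁ _ h₃
  have hpj : p₂ ≫ j = 0 := comp_distTriang_mor_zero₁₂ _ h₂
  have hjk : j ≫ k = 0 := comp_distTriang_mor_zero₂₃ _ h₂
  have hkp : k ≫ p₂⟦(1 : ℤ)⟧' = 0 := comp_distTriang_mor_zero₃₁ _ h₂
  obtain ⟨f₀, hf₁, hf₂⟩ : ∃ f₀ : K ⟶ A, j ≫ f₀ = g ≫ m ∧ k ≫ p₁⟦(1 : ℤ)⟧' = f₀ ≫ a :=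
    complete_distinguished_triangle_morphism _ _ h₂ h₃ p₁ g hsq.symm
  have heq : e ≫ q = 0 := by simpa using congrArg (biprod.inl ≫ ·) hcq
  have hgq : g ≫ q = 0 := by simpa using congrArg (biprod.inr ≫ ·) hcq
  have hlift {Z : C} (z : Z ⟶ P⟦(1 : ℤ)⟧) :
      z ≫ p₁⟦(1 : ℤ)⟧' = 0 → z ≫ p₂⟦(1 : ℤ)⟧' = 0 → z ≫ (biprod.lift p₁ p₂)⟦(1 : ℤ)⟧' = 0 := by
    intro hz₁ hz₂
    rw [biprod.lift_eq, Functor.map_add, Functor.map_comp, Functor.map_comp, Preadditive.comp_add,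
      reassoc_of% hz₁, reassoc_of% hz₂, zero_comp, zero_comp, add_zero]
  have exp {Z : C} (y : Z ⟶ E) (x : Z ⟶ B) (h : y ≫ e = x ≫ g) :
      ∃ w : Z ⟶ P, x = w ≫ p₂ := by
    have h' : biprod.lift y x ≫ biprod.desc e (-g) = 0 := by
      rw [biprod.lift_desc, h, Preadditive.comp_neg, add_neg_cancel]
    obtain ⟨w, hw⟩ : ∃ w : Z ⟶ P, biprod.lift y x = w ≫ biprod.lift p₁ p₂ :=
      Triangle.coyoneda_exact₂ _ h₁ (biprod.lift y x) h'
    exact ⟨w, by simpa using congrArg (· ≫ biprod.snd) hw⟩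
  -- `j` kills the fibre of `g ≫ m`, since on it `g` lifts through `e`, so that it maps to `P`.
  obtain ⟨θ, hθ⟩ : ∃ θ : A ⟶ K, g ≫ m ≫ θ = j := by
    obtain ⟨W, w, w', hW⟩ := distinguished_cocone_triangle₁ (g ≫ m)
    have hw : w ≫ g ≫ m = 0 := comp_distTriang_mor_zero₁₂ _ hW
    obtain ⟨y, hy⟩ : ∃ y : W ⟶ E, w ≫ g = y ≫ e :=
      Triangle.coyoneda_exact₂ _ h₃ (w ≫ g) ((Category.assoc _ _ _).trans hw)
    obtain ⟨x, hx⟩ := exp y w hy.symm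
    have hwj : w ≫ j = 0 := by rw [hx, Category.assoc, hpj, comp_zero]
    obtain ⟨θ, hθ⟩ : ∃ θ : A ⟶ K, j = (g ≫ m) ≫ θ := Triangle.yoneda_exact₂ _ hW j hwj
    exact ⟨θ, by rw [hθ, Category.assoc]⟩
  obtain ⟨ψ, hψ₁, hψ₂⟩ : ∃ ψ : A ⟶ P⟦(1 : ℤ)⟧,
      ψ ≫ p₁⟦(1 : ℤ)⟧' = a ∧ ψ ≫ p₂⟦(1 : ℤ)⟧' = 0 := by
    have h0 : (a ≫ (biprod.inl : E ⟶ E ⊞ B)⟦(1 : ℤ)⟧') ≫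
        (-(biprod.desc e (-g))⟦(1 : ℤ)⟧') = 0 := by
      rw [Preadditive.comp_neg, Category.assoc, ← Functor.map_comp, biprod.inl_desc, hae, neg_zero]
    obtain ⟨ψ, hψ⟩ : ∃ ψ : A ⟶ P⟦(1 : ℤ)⟧,
        a ≫ (biprod.inl : E ⟶ E ⊞ B)⟦(1 : ℤ)⟧' = ψ ≫ (-(biprod.lift p₁ p₂)⟦(1 : ℤ)⟧') :=
      Triangle.coyoneda_exact₃ _ (rot_of_distTriang _ (rot_of_distTriang _ h₁)) _ h0
    refine ⟨-ψ, ?_, ?_⟩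
    · have h := congrArg (· ≫ (biprod.fst : E ⊞ B ⟶ E)⟦(1 : ℤ)⟧') hψ
      simp only [Category.assoc, Preadditive.neg_comp, Preadditive.comp_neg, ← Functor.map_comp,
        biprod.lift_fst, biprod.inl_fst] at h
      rw [Preadditive.neg_comp, ← h, CategoryTheory.Functor.map_id, Category.comp_id]
    · have h := congrArg (· ≫ (biprod.snd : E ⊞ B ⟶ B)⟦(1 : ℤ)⟧') hψ
      simp only [Category.assoc, Preadditive.neg_comp, Preadditive.comp_neg, ← Functor.map_comp,
        biprod.lift_snd, biprod.inl_snd, Functor.map_zero, comp_zero] at h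
      rw [Preadditive.neg_comp, h]
  refine chase_isIso p₂ e g q (p₁⟦(1 : ℤ)⟧') (p₂⟦(1 : ℤ)⟧') j k m a f₀ θ ψ hf₁ hf₂.symm hθ hψ₁ hψ₂
    heq hgq ?_ ?_ hpj hjk hkp hem hma
    (fun z hz₁ hz₂ => Triangle.coyoneda_exact₁ _ h₁ z (hlift z hz₁ hz₂))
    (fun z hz => Triangle.coyoneda_exact₁ _ h₂ z hz)
    (fun z hz => Triangle.coyoneda_exact₃ _ h₂ z hz)
    (fun z hz => Triangle.coyoneda_exact₃ _ h₃ z hz)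
    (fun z hz => Triangle.coyoneda_exact₂ _ h₃ z hz)
    exp
    (fun z hz₁ hz₂ => Triangle.yoneda_exact₃ _ h₁ z (by
      change biprod.desc e (-g) ≫ z = 0
      apply biprod.hom_ext' <;> simp [hz₁, hz₂]))
    (fun z hz => Triangle.yoneda_exact₃ _ h₂ z hz)
    (fun z hz => ?_)
  · have h := congrArg (· ≫ (biprod.fst : E ⊞ B ⟶ E)⟦(1 : ℤ)⟧') hqp
    simpa only [Category.assoc, ← Functor.map_comp, biprod.lift_fst, zero_comp] using h
  · have h := congrArg (· ≫ (biprod.snd : E ⊞ B ⟶ B)⟦(1 : ℤ)⟧') hqp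
    simpa only [Category.assoc, ← Functor.map_comp, biprod.lift_snd, zero_comp] using h
  · obtain ⟨y, hy⟩ : ∃ y, z = y ≫ biprod.desc e (-g) := Triangle.coyoneda_exact₃ _ h₁ z hz
    refine ⟨y ≫ biprod.fst, -(y ≫ biprod.snd), ?_⟩
    rw [hy, biprod.desc_eq]
    simp

/-- Associativity of extensions at the level of objects, with `P` the homotopy pullback of `E ⟶ M`
and `B ⟶ M`. -/
lemma IsExt.assoc [Linear ℂ C] {A E M B D : C} [FiniteDimensional ℂ (End M)]
    (h : IsExt A E M) (h' : IsExt B M D) : ∃ P : C, IsExt A P B ∧ IsExt P E D := by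
  obtain ⟨i, e, m, hT⟩ := h
  obtain ⟨g, d, n, hT'⟩ := h'
  obtain ⟨P, l, q, hP⟩ := distinguished_cocone_triangle₁ (biprod.desc e (-g))
  obtain ⟨p₁, p₂, rfl⟩ : ∃ p₁ p₂, l = biprod.lift p₁ p₂ :=
    ⟨l ≫ biprod.fst, l ≫ biprod.snd, by apply biprod.hom_ext <;> simp⟩
  refine ⟨P, ?_, ?_⟩
  · obtain ⟨K, j, k, hK⟩ := distinguished_cocone_triangle p₂
    obtain ⟨iso⟩ := iso_cone_of_homotopyCartesian hP hK (rot_of_distTriang _ hT)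
    exact ((isExt_of_dist _ hK).of_iso (Iso.refl _) (Iso.refl _) iso).invRotate
  -- The second claim uses the square with the roles of `e` and `g` exchanged.
  · have hP' : Triangle.mk (biprod.lift p₂ p₁) (biprod.desc g (-e)) (-q) ∈ distTriang C := by
      refine isomorphic_distinguished _ hP _ ?_
      let ν : M ≅ M := ⟨-𝟙 M, -𝟙 M, by simp, by simp⟩
      refine Triangle.isoMk _ _ (Iso.refl _) (biprod.braiding _ _) ν ?_ ?_ ?_
      · change biprod.lift p₂ p₁ ≫ (biprod.braiding B E).hom = 𝟙 P ≫ biprod.lift p₁ p₂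
        apply biprod.hom_ext <;> simp
      · change biprod.desc g (-e) ≫ (-𝟙 M) = (biprod.braiding B E).hom ≫ biprod.desc e (-g)
        apply biprod.hom_ext' <;> simp
      · change (-q) ≫ (𝟙 P)⟦(1 : ℤ)⟧' = (-𝟙 M) ≫ q
        simp
    obtain ⟨K, j, k, hK⟩ := distinguished_cocone_triangle p₁
    obtain ⟨iso⟩ := iso_cone_of_homotopyCartesian hP' hK hT'
    exact (isExt_of_dist _ hK).of_iso (Iso.refl _) (Iso.refl _) iso

end Ext

/-! ### Towers and complexity -/

section Built

variable {C : Type u} [Category.{v} C] [Preadditive C] [HasZeroObject C]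
  [HasShift C ℤ] [∀ n : ℤ, (shiftFunctor C n).Additive] [Pretriangulated C]

/-- `Built S l A`: the object `A` has a finite filtration with successive cones `S⟦n⟧`, where `n`
runs through `l`, the last step being the head of `l`. -/
inductive Built (S : C) : List ℤ → C → Prop
  | nil {A : C} : IsZero A → Built S [] A
  | cons {A B : C} {n : ℤ} {l : List ℤ} : Built S l A → IsExt A B (S⟦n⟧) → Built S (n :: l) B

/-- The cost `∑ exp (n t)`, over the entries `n` of `l`, of a tower with shifts `l`. -/
noncomputable def weight (t : ℝ) (l : List ℤ) : ℝ≥0∞ :=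
  (l.map fun n : ℤ => ENNReal.ofReal (Real.exp ((n : ℝ) * t))).sum

lemma weight_map_add (t : ℝ) (l : List ℤ) (k : ℤ) :
    weight t (l.map (· + k)) = ENNReal.ofReal (Real.exp ((k : ℝ) * t)) * weight t l := by
  induction l with
  | nil => simp [weight]
  | cons n l ih =>
    simp only [weight, List.map_cons, List.sum_cons, mul_add] at ih ⊢
    rw [ih, Int.cast_add, add_mul, Real.exp_add, ENNReal.ofReal_mul (Real.exp_pos _).le, mul_comm]

lemma weight_flatMap (t : ℝ) (l l' : List ℤ) :
    weight t (l.flatMap fun n => l'.map (· + n)) = weight t l' * weight t l := by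
  induction l with
  | nil => simp [weight]
  | cons n l ih =>
    have h : weight t ((n :: l).flatMap fun n => l'.map (· + n)) =
        weight t (l'.map (· + n)) + weight t (l.flatMap fun n => l'.map (· + n)) := by
      simp [weight]
    rw [h, ih, weight_map_add]
    simp only [weight, List.map_cons, List.sum_cons, mul_add]
    rw [mul_comm]

lemma weight_ne_top (t : ℝ) (l : List ℤ) : weight t l ≠ ⊤ := by
  induction l with
  | nil => simp [weight]
  | cons n l ih =>
    simp only [weight, List.map_cons, List.sum_cons] at ih ⊢
    exact ENNReal.add_ne_top.2 ⟨ENNReal.ofReal_ne_top, ih⟩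

lemma Built.iso {S A B : C} {l : List ℤ} (h : Built S l A) (e : A ≅ B) : Built S l B := by
  cases h with
  | nil h => exact .nil (h.of_iso e.symm)
  | cons h h' => exact .cons h (h'.of_iso (Iso.refl _) e (Iso.refl _))

lemma Built.shift {S A : C} {l : List ℤ} (h : Built S l A) (k : ℤ) :
    Built S (l.map (· + k)) (A⟦k⟧) := by
  induction h with
  | nil h => exact .nil ((shiftFunctor C k).map_isZero h)
  | cons _ h' ih =>
    exact .cons ih ((h'.shift k).of_iso (Iso.refl _) (Iso.refl _)
      ((shiftFunctorAdd C _ k).app S).symm)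

lemma Built.map {S A : C} {l : List ℤ} (h : Built S l A) (H : C ⥤ C) [H.CommShift ℤ]
    [H.IsTriangulated] : Built (H.obj S) l (H.obj A) := by
  induction h with
  | nil h => exact .nil (H.map_isZero h)
  | @cons _ _ n _ _ h' ih =>
    exact .cons ih ((h'.map H).of_iso (Iso.refl _) (Iso.refl _) ((H.commShiftIso n).app S))

lemma Built.of_isZero {S A : C} (h : Built S [] A) : IsZero A := by
  cases h with
  | nil h => exact h

lemma isZero_biprod {X Y : C} (hX : IsZero X) (hY : IsZero Y) : IsZero (X ⊞ Y) := by
  rw [IsZero.iff_id_eq_zero]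
  apply biprod.hom_ext
  · exact hX.eq_of_tgt _ _
  · exact hY.eq_of_tgt _ _

lemma isZero_of_biprod {X Y : C} (h : IsZero (X ⊞ Y)) : IsZero X := by
  rw [IsZero.iff_id_eq_zero, ← biprod.inl_fst (X := X) (Y := Y), h.eq_of_tgt biprod.inl 0, zero_comp]

/-- An additive functor commutes with binary biproducts. -/
noncomputable def mapBiprodIso (F : C ⥤ C) [F.Additive] (X Y : C) :
    F.obj (X ⊞ Y) ≅ F.obj X ⊞ F.obj Y where
  hom := biprod.lift (F.map biprod.fst) (F.map biprod.snd)
  inv := biprod.desc (F.map biprod.inl) (F.map biprod.inr)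
  hom_inv_id := by
    rw [biprod.lift_desc, ← F.map_comp, ← F.map_comp, ← F.map_add, biprod.total,
      CategoryTheory.Functor.map_id]
  inv_hom_id := by
    apply biprod.hom_ext' <;> apply biprod.hom_ext <;> simp [← F.map_comp]

/-- A tower built from `S` is a summand of one built from `S ⊞ X`: split off `X⟦n⟧` at every
step. -/
lemma Built.biprod {S A : C} {l : List ℤ} (h : Built S l A) (X : C) :
    ∃ A', Built (S ⊞ X) l (A ⊞ A') := by
  induction h with
  | nil h => exact ⟨_, .nil (isZero_biprod h h)⟩
  | @cons A B n _ _ h' ih =>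
    obtain ⟨A', hA'⟩ := ih
    exact ⟨A' ⊞ X⟦n⟧, .cons hA' ((h'.biprod (isExt_biprod A' (X⟦n⟧))).of_iso (Iso.refl _)
      (Iso.refl _) (mapBiprodIso (shiftFunctor C n) S X).symm)⟩

/-- The towers in the definition of `complexity` are instances of `Built`. -/
lemma exists_built (M : C) (t : ℝ) (p : ℕ) (n : Fin p → ℤ) (A : Fin (p + 1) → C)
    (h₀ : IsZero (A 0)) (h : ∀ i : Fin p, IsExt (A i.castSucc) (A i.succ) (M⟦n i⟧)) :
    ∃ l, Built M l (A (Fin.last p)) ∧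
      weight t l = ∑ i : Fin p, ENNReal.ofReal (Real.exp ((n i : ℝ) * t)) := by
  induction p with
  | zero => exact ⟨[], .nil h₀, by simp [weight]⟩
  | succ p ih =>
    obtain ⟨l, hl, hw⟩ := ih (fun i => n i.castSucc) (fun i => A i.castSucc) h₀
      (fun i => h i.castSucc)
    refine ⟨n (Fin.last p) :: l, .cons hl (h (Fin.last p)), ?_⟩
    rw [Fin.sum_univ_castSucc, ← hw, add_comm]
    simp [weight]

/-- Conversely, `Built` produces towers as in the definition of `complexity`. -/
lemma Built.exists_tower {M B : C} {l : List ℤ} (h : Built M l B) (t : ℝ) :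
    ∃ (n : Fin l.length → ℤ) (A : Fin (l.length + 1) → C), IsZero (A 0) ∧
      A (Fin.last l.length) = B ∧
      (∀ i : Fin l.length, IsExt (A i.castSucc) (A i.succ) (M⟦n i⟧)) ∧
      weight t l = ∑ i : Fin l.length, ENNReal.ofReal (Real.exp ((n i : ℝ) * t)) := by
  induction h with
  | @nil B h => exact ⟨Fin.elim0, fun _ => B, h, rfl, fun i => i.elim0, by simp [weight]⟩
  | @cons A₁ B n l h h' ih =>
    obtain ⟨n', A, h₀, hA, hs, hw⟩ := ih
    refine ⟨Fin.snoc (α := fun _ => ℤ) n' n, Fin.snoc (α := fun _ => C) A B, ?_, ?_, ?_, ?_⟩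
    · rw [← Fin.castSucc_zero, Fin.snoc_castSucc]
      exact h₀
    · exact Fin.snoc_last (α := fun _ => C) B A
    · intro i
      refine Fin.lastCases ?_ (fun i => ?_) i
      · rw [Fin.snoc_castSucc, Fin.snoc_last, Fin.succ_last, hA]
        erw [Fin.snoc_last]
        exact h'
      · rw [Fin.snoc_castSucc, Fin.snoc_castSucc, ← Fin.castSucc_succ]
        erw [Fin.snoc_castSucc]
        exact hs i
    · erw [Fin.sum_univ_castSucc]
      simp only [Fin.snoc_castSucc, Fin.snoc_last]
      rw [← hw, add_comm]
      simp [weight]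

lemma complexity_le {G N N' : C} (hG : IsSplitGenerator C G) (hN : ¬ IsZero N) (t : ℝ)
    {l : List ℤ} (h : Built G l (N ⊞ N')) : complexity C t G N ≤ weight t l := by
  rw [complexity, if_neg hN, if_pos (hG N)]
  obtain ⟨n, A, h₀, hA, hs, hw⟩ := h.exists_tower t
  refine sInf_le ⟨l.length, ?_, n, A, N', h₀, ⟨eqToIso hA⟩, hs, hw⟩
  rw [List.length_pos_iff]
  rintro rfl
  exact hN (isZero_of_biprod h.of_isZero)

lemma le_complexity {G N : C} (hG : IsSplitGenerator C G) (hN : ¬ IsZero N) (t : ℝ) (c : ℝ≥0∞)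
    (h : ∀ (l : List ℤ) (N' : C), Built G l (N ⊞ N') → c ≤ weight t l) :
    c ≤ complexity C t G N := by
  rw [complexity, if_neg hN, if_pos (hG N)]
  refine le_sInf ?_
  rintro _ ⟨p, _, n, A, N', h₀, ⟨e⟩, hs, rfl⟩
  obtain ⟨l, hl, hw⟩ := exists_built G t p n A h₀ hs
  rw [← hw]
  exact h l N' (hl.iso e)

lemma complexity_congr (t : ℝ) {G N N' : C} (hG : IsSplitGenerator C G) (e : N ≅ N') :
    complexity C t G N = complexity C t G N' := by
  by_cases hN : IsZero N
  · rw [complexity, complexity, if_pos hN, if_pos (hN.of_iso e.symm)]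
  · have hN' : ¬ IsZero N' := fun h => hN (h.of_iso e)
    apply le_antisymm
    · exact le_complexity hG hN' t _ fun l X h =>
        complexity_le hG hN t (h.iso (biprod.mapIso e.symm (Iso.refl X)))
    · exact le_complexity hG hN t _ fun l X h =>
        complexity_le hG hN' t (h.iso (biprod.mapIso e (Iso.refl X)))

variable [Linear ℂ C] [∀ M : C, FiniteDimensional ℂ (End M)]

lemma Built.ext {G A U E : C} {la lu : List ℤ} (hA : Built G la A) (hU : Built G lu U)
    (h : IsExt A E U) : Built G (lu ++ la) E := by
  induction hU generalizing E with
  | nil hU =>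
    obtain ⟨f, g, k, hT⟩ := h
    have : IsIso f := (Triangle.isZero₃_iff_isIso₁ _ hT).1 hU
    exact hA.iso (asIso f)
  | cons _ h' ih =>
    obtain ⟨P, hP, hPE⟩ := h.assoc h'
    exact .cons (ih hP) hPE

/-- Substitution of a tower for every step of another tower. -/
lemma Built.subst {G U V : C} {l l' : List ℤ} (hV : Built U l V) (hU : Built G l' U) :
    Built G (l.flatMap fun n => l'.map (· + n)) V := by
  induction hV with
  | nil h => exact .nil h
  | @cons _ _ n _ _ h ih => exact ih.ext (hU.shift n) h

lemma isThick_built (G : C) : IsThick C {X : C | ∃ l X', Built G l (X ⊞ X')} where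
  mem_of_iso := by
    rintro X Y e ⟨l, X', h⟩
    exact ⟨l, X', h.iso (biprod.mapIso e (Iso.refl X'))⟩
  shift_mem := by
    rintro X n ⟨l, X', h⟩
    exact ⟨_, _, (h.shift n).iso (mapBiprodIso (shiftFunctor C n) X X')⟩
  cone_mem := by
    rintro T hT ⟨l, X', hX⟩ ⟨l', Y', hY⟩
    have h := (isExt_of_dist T hT).rotate.biprod (isExt_biprod Y' (X'⟦(1 : ℤ)⟧))
    exact ⟨_, _, hY.ext ((hX.shift 1).iso (mapBiprodIso (shiftFunctor C (1 : ℤ)) T.obj₁ X')) h⟩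
  summand_mem := by
    rintro X Y ⟨l, Z, h⟩
    exact ⟨l, _, h.iso (biprod.associator X Y Z)⟩

lemma exists_built_biprod {G : C} (hG : IsSplitGenerator C G) (X : C) :
    ∃ l X', Built G l (X ⊞ X') := by
  refine Set.mem_sInter.1 (hG X) _ ⟨isThick_built G, [0], (HasZeroObject.zero' C).zero, ?_⟩
  exact .cons (.nil (isZero_zero C))
    ((isExt_biprod _ G).of_iso (Iso.refl _) (biprod.braiding _ G) ((shiftFunctorZero C ℤ).app G).symm)

lemma complexity_ne_top {G : C} (hG : IsSplitGenerator C G) (t : ℝ) {N : C} (hN : ¬ IsZero N) :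
    complexity C t G N ≠ ⊤ := by
  obtain ⟨l, X', h⟩ := exists_built_biprod hG N
  exact ne_top_of_le_ne_top (weight_ne_top t l) (complexity_le hG hN t h)

/-- Submultiplicativity of the complexity under a triangulated functor. -/
lemma complexity_map_le {G : C} (hG : IsSplitGenerator C G) (t : ℝ) (H : C ⥤ C) [H.CommShift ℤ]
    [H.IsTriangulated] {N : C} (hHG : ¬ IsZero (H.obj G)) (hHN : ¬ IsZero (H.obj N)) :
    complexity C t G (H.obj N) ≤ complexity C t G (H.obj G) * complexity C t G N := by
  have hN : ¬ IsZero N := fun h => hHN (H.map_isZero h)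
  have key (l l' : List ℤ) (X Y : C) (hX : Built G l' (H.obj G ⊞ X)) (hY : Built G l (N ⊞ Y)) :
      complexity C t G (H.obj N) ≤ weight t l' * weight t l := by
    obtain ⟨V, hV⟩ := (hY.map H).biprod X
    rw [← weight_flatMap]
    exact complexity_le hG hHN t ((hV.subst hX).iso
      (biprod.mapIso (mapBiprodIso H N Y) (Iso.refl V) ≪≫ biprod.associator _ _ V))
  have hHG' := complexity_ne_top hG t hHG
  have key' (l : List ℤ) (Y : C) (hY : Built G l (N ⊞ Y)) :
      complexity C t G (H.obj N) ≤ complexity C t G (H.obj G) * weight t l :=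
    (ENNReal.div_le_iff_le_mul (.inr hHG') (.inl (weight_ne_top t l))).1
      (le_complexity hG hHG t _ fun l' X hX => ENNReal.div_le_of_le_mul (key l l' X Y hX hY))
  rw [mul_comm]
  refine (ENNReal.div_le_iff_le_mul (.inr (complexity_ne_top hG t hN)) (.inl hHG')).1
    (le_complexity hG hN t _ fun l Y hY => ENNReal.div_le_of_le_mul ?_)
  rw [mul_comm]
  exact key' l Y hY

end Built

/-! ### Iterates of functors -/

section Iter

variable {C : Type u} [Category.{v} C]

/-- The iterates of a functor commuting with shifts commute with shifts. -/
@[reducible]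
noncomputable def iterCommShift [HasShift C ℤ] (F : C ⥤ C) [F.CommShift ℤ] :
    ∀ m : ℕ, (iter C F m).CommShift ℤ
  | 0 => inferInstanceAs ((𝟭 C).CommShift ℤ)
  | m + 1 =>
    letI := iterCommShift F m
    inferInstanceAs ((iter C F m ⋙ F).CommShift ℤ)

noncomputable instance [HasShift C ℤ] (F : C ⥤ C) [F.CommShift ℤ] (m : ℕ) :
    (iter C F m).CommShift ℤ := iterCommShift F m

instance [Preadditive C] [HasZeroObject C]
    [HasShift C ℤ] [∀ n : ℤ, (shiftFunctor C n).Additive] [Pretriangulated C]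
    (F : C ⥤ C) [F.CommShift ℤ] [F.IsTriangulated] (m : ℕ) : (iter C F m).IsTriangulated := by
  induction m with
  | zero => exact inferInstanceAs (𝟭 C).IsTriangulated
  | succ m ih => exact inferInstanceAs (iter C F m ⋙ F).IsTriangulated

lemma iter_comp_comm (F H : C ⥤ C) (e : F ⋙ H ≅ H ⋙ F) (m : ℕ) :
    Nonempty (iter C F m ⋙ H ≅ H ⋙ iter C F m) := by
  induction m with
  | zero => exact ⟨H.leftUnitor ≪≫ H.rightUnitor.symm⟩
  | succ m ih =>
    obtain ⟨i⟩ := ih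
    exact ⟨Functor.isoWhiskerLeft (iter C F m) e ≪≫ Functor.isoWhiskerRight i F⟩

lemma iter_comp_iso (F₁ F₂ : C ⥤ C) (e : F₂ ⋙ F₁ ≅ F₁ ⋙ F₂) (m : ℕ) :
    Nonempty (iter C (F₂ ⋙ F₁) m ≅ iter C F₂ m ⋙ iter C F₁ m) := by
  induction m with
  | zero => exact ⟨(𝟭 C).leftUnitor.symm⟩
  | succ m ih =>
    obtain ⟨i⟩ := ih
    obtain ⟨j⟩ := iter_comp_comm F₁ F₂ e.symm m
    exact ⟨Functor.isoWhiskerRight i (F₂ ⋙ F₁) ≪≫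
      Functor.isoWhiskerRight (Functor.isoWhiskerLeft (iter C F₂ m) j) F₁⟩

end Iter

/-! ### Entropy -/

section Entropy

variable {C : Type u} [Category.{v} C] [Preadditive C] [HasZeroObject C]
  [HasShift C ℤ] [∀ n : ℤ, (shiftFunctor C n).Additive] [Pretriangulated C] [Linear ℂ C]

lemma finiteDimensional_end (hft : IsFiniteType C) (M : C) : FiniteDimensional ℂ (End M) := by
  have := (hft M M).2 0
  exact (Linear.homCongr ℂ (Iso.refl M) ((shiftFunctorZero C ℤ).app M)).finiteDimensional

variable [∀ M : C, FiniteDimensional ℂ (End M)]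

lemma complexity_iter_le {G : C} (hG : IsSplitGenerator C G) (t : ℝ) (F : C ⥤ C) [F.CommShift ℤ]
    [F.IsTriangulated] (h : ∀ n : ℕ, ¬ IsZero ((iter C F n).obj G)) (m : ℕ) :
    complexity C t G ((iter C F (m + 1)).obj G) ≤ complexity C t G (F.obj G) ^ (m + 1) := by
  induction m with
  | zero => rw [zero_add, pow_one]; rfl
  | succ m ih =>
    rw [pow_succ']
    exact (complexity_map_le hG t F (N := (iter C F (m + 1)).obj G) (h 1) (h (m + 2))).trans
      (mul_le_mul_right ih _)

lemma entropy_ne_top {G : C} (hG : IsSplitGenerator C G) (t : ℝ) (F : C ⥤ C) [F.CommShift ℤ]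
    [F.IsTriangulated] (h : ∀ n : ℕ, ¬ IsZero ((iter C F n).obj G)) :
    entropy C F G t ≠ ⊤ := by
  have hc : (complexity C t G (F.obj G)).log ≠ ⊤ := by
    rw [Ne, ENNReal.log_eq_top_iff]
    exact complexity_ne_top hG t (h 1)
  refine ne_top_of_le_ne_top hc (limsup_le_of_le (by isBoundedDefault) ?_)
  filter_upwards [eventually_ge_atTop 1] with m hm
  obtain ⟨m, rfl⟩ := Nat.exists_eq_add_of_le' hm
  have h1 := ENNReal.log_monotone (complexity_iter_le hG t F h m)
  rw [ENNReal.log_pow] at h1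
  have hpos : (0 : EReal) ≤ ((((m + 1 : ℕ) : ℝ)⁻¹ : ℝ) : EReal) := by
    exact_mod_cast inv_nonneg.2 (Nat.cast_nonneg _)
  refine (mul_le_mul_of_nonneg_left h1 hpos).trans (le_of_eq ?_)
  have h2 : ((((m + 1 : ℕ) : ℝ)⁻¹ : ℝ) : EReal) * ((m + 1 : ℕ) : EReal) = 1 := by
    have : (((m + 1 : ℕ) : ℝ) : EReal) = ((m + 1 : ℕ) : EReal) := EReal.coe_coe_eq_natCast _
    rw [← this, ← EReal.coe_mul, inv_mul_cancel₀ (Nat.cast_ne_zero.2 m.succ_ne_zero), EReal.coe_one]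
  rw [← mul_assoc, h2, one_mul]

end Entropy

/-- If `F₁ F₂ ≅ F₂ F₁` then `h_t(F₁ F₂) ≤ h_t(F₁) + h_t(F₂)` (here `F₁ F₂ = F₂ ⋙ F₁`). -/
theorem statement_11 {C : Type u} [Category.{v} C] [Preadditive C] [HasZeroObject C]
    [HasShift C ℤ] [∀ n : ℤ, (shiftFunctor C n).Additive] [Pretriangulated C] [Linear ℂ C]
    (hC : ∃ X : C, ¬ IsZero X) (hft : IsFiniteType C)
    (G : C) (hG : IsSplitGenerator C G)
    (F₁ : C ⥤ C) [F₁.Additive] [F₁.Linear ℂ] [F₁.CommShift ℤ] [F₁.IsTriangulated]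
    (F₂ : C ⥤ C) [F₂.Additive] [F₂.Linear ℂ] [F₂.CommShift ℤ] [F₂.IsTriangulated]
    (h₁ : ∀ n : ℕ, ¬ IsZero ((iter C F₁ n).obj G))
    (h₂ : ∀ n : ℕ, ¬ IsZero ((iter C F₂ n).obj G))
    (h₁₂ : ∀ n : ℕ, ¬ IsZero ((iter C (F₂ ⋙ F₁) n).obj G))
    (hcomm : Nonempty ((F₂ ⋙ F₁) ≅ (F₁ ⋙ F₂))) (t : ℝ) :
    entropy C (F₂ ⋙ F₁) G t ≤ entropy C F₁ G t + entropy C F₂ G t := by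
  have := finiteDimensional_end hft
  obtain ⟨e⟩ := hcomm
  refine le_trans ?_ (EReal.limsup_add_le (.inr (entropy_ne_top hG t F₂ h₂))
    (.inl (entropy_ne_top hG t F₁ h₁)))
  refine limsup_le_limsup (Eventually.of_forall fun m => ?_)
  obtain ⟨i⟩ := iter_comp_iso F₁ F₂ e m
  have hiso : (iter C (F₂ ⋙ F₁) m).obj G ≅ (iter C F₁ m).obj ((iter C F₂ m).obj G) := i.app G
  have hpos : (0 : EReal) ≤ (((m : ℝ)⁻¹ : ℝ) : EReal) := by
    exact_mod_cast inv_nonneg.2 (Nat.cast_nonneg _)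
  simp only [Pi.add_apply]
  rw [← EReal.left_distrib_of_nonneg_of_ne_top hpos (EReal.coe_ne_top _), ← ENNReal.log_mul_add,
    complexity_congr t hG hiso]
  exact mul_le_mul_of_nonneg_left (ENNReal.log_monotone (complexity_map_le hG t (iter C F₁ m) (h₁ m)
    (fun h => h₁₂ m (h.of_iso hiso)))) hpos

end CatEntropy
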